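/- Let F be the CDF of a Borel probability measure on ℝ, fix m ≥ 1 and τ_i = (2i−1)/(2m), let a_i = inf{x : F(x) ≥ τ_i}, b_i = sup{x : F(x) ≤ τ_i}, Λ = {θ ∈ ℝᵐ : θ_i ∈ [a_i, b_i] for all i}, L(θ) = ∑_{i=1}^m ∫_{a_i}^{θ_i} (F(s) − τ_i) ds, and let H : ℝᵐ ⇒ ℝᵐ be H(θ) = {h : h_i ∈ τ_i − [F(θ_i⁻), F(θ_i)] for all i}. Let z : [0,∞) → ℝᵐ be a solution of the differential inclusion ∂_t z_t ∈ H(z_t), i.e. there is a locally integrable g : [0,∞) → ℝᵐ with z_t = z_0 + ∫_0^t g_u du for all t ≥ 0 and g_u ∈ H(z_u) for almost every u ≥ 0. Then L is a Lyapunov function for this inclusion and Λ: for all 0 ≤ s < t, if z_s ∉ Λ then L(z_t) < L(z_s), and L(θ) = 0 for all θ ∈ Λ. -/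

import Mathlib

open MeasureTheory Filter

/-!
Each summand of `L` strictly decreases on `(-∞, a i]`, vanishes on `[a i, b i]` and strictly
increases on `[b i, ∞)`. The velocity `τ i - p`, with `p` between the one-sided limits of `F` at the
current position, is positive left of `a i`, nonnegative left of `b i`, nonpositive right of `a i`
and negative right of `b i`. Hence a coordinate outside `[a i, b i]` moves strictly towards this
interval without crossing its nearest endpoint, and a coordinate inside it is at rest. Comparing
positions in this way replaces a chain rule along absolutely continuous paths.
-/

section Quantiles

variable {α β : Type*} [ConditionallyCompleteLinearOrder α] [LinearOrder β]

/-- The left endpoint of the `τ`-quantile set of `F`. It has its intended meaning only when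
`{x | τ ≤ F x}` is nonempty and bounded below; otherwise it is a junk value. -/
noncomputable def lowerQuantile (F : α → β) (τ : β) : α := sInf {x | τ ≤ F x}

/-- The right endpoint of the `τ`-quantile set of `F`. It has its intended meaning only when
`{x | F x ≤ τ}` is nonempty and bounded above; otherwise it is a junk value. -/
noncomputable def upperQuantile (F : α → β) (τ : β) : α := sSup {x | F x ≤ τ}

variable {F : α → β} {τ : β} {x : α}

lemma lt_of_lt_lowerQuantile (hF : Monotone F) (hlow : ∃ x, F x < τ)
    (hx : x < lowerQuantile F τ) : F x < τ := by
  obtain ⟨l, hl⟩ := hlow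
  have hbdd : BddBelow {x | τ ≤ F x} := ⟨l, fun y hy => (hF.reflect_lt (hl.trans_le hy)).le⟩
  exact not_le.1 fun hle => notMem_of_lt_csInf hx hbdd hle

lemma le_of_lowerQuantile_lt (hF : Monotone F) (hhigh : ∃ x, τ ≤ F x)
    (hx : lowerQuantile F τ < x) : τ ≤ F x :=
  let ⟨_, hv, hvx⟩ := exists_lt_of_csInf_lt hhigh hx
  le_trans hv (hF hvx.le)

lemma le_of_lt_upperQuantile (hF : Monotone F) (hlow : ∃ x, F x ≤ τ)
    (hx : x < upperQuantile F τ) : F x ≤ τ :=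
  let ⟨_, hv, hxv⟩ := exists_lt_of_lt_csSup hlow hx
  le_trans (hF hxv.le) hv

lemma lt_of_upperQuantile_lt (hF : Monotone F) (hhigh : ∃ x, τ < F x)
    (hx : upperQuantile F τ < x) : τ < F x := by
  obtain ⟨r, hr⟩ := hhigh
  have hbdd : BddAbove {x | F x ≤ τ} := ⟨r, fun y hy => (hF.reflect_lt (hy.trans_lt hr)).le⟩
  exact not_le.1 fun hle => notMem_of_csSup_lt hx hbdd hle

end Quantiles

section FilledGraph

/-- The value at `x` of the filled-in graph of `F`. Using the right limit instead of `F x` makes the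
notion independent of one-sided continuity conventions; the two agree for a CDF. -/
noncomputable def filledIn (F : ℝ → ℝ) (x : ℝ) : Set ℝ :=
  Set.Icc (Function.leftLim F x) (Function.rightLim F x)

variable {F : ℝ → ℝ} {τ p x : ℝ}

lemma Icc_leftLim_subset_filledIn (hF : Monotone F) :
    Set.Icc (Function.leftLim F x) (F x) ⊆ filledIn F x :=
  Set.Icc_subset_Icc_right (hF.le_rightLim le_rfl)

lemma lt_of_mem_filledIn_of_lt_lowerQuantile (hF : Monotone F) (hlow : ∃ x, F x < τ)
    (hp : p ∈ filledIn F x) (hx : x < lowerQuantile F τ) : p < τ :=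
  let ⟨_, hxv, hv⟩ := exists_between hx
  (hp.2.trans (hF.rightLim_le hxv)).trans_lt (lt_of_lt_lowerQuantile hF hlow hv)

lemma le_of_mem_filledIn_of_lowerQuantile_lt (hF : Monotone F) (hhigh : ∃ x, τ ≤ F x)
    (hp : p ∈ filledIn F x) (hx : lowerQuantile F τ < x) : τ ≤ p :=
  let ⟨_, hv, hvx⟩ := exists_between hx
  (le_of_lowerQuantile_lt hF hhigh hv).trans ((hF.le_leftLim hvx).trans hp.1)

lemma le_of_mem_filledIn_of_lt_upperQuantile (hF : Monotone F) (hlow : ∃ x, F x ≤ τ)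
    (hp : p ∈ filledIn F x) (hx : x < upperQuantile F τ) : p ≤ τ :=
  let ⟨_, hxv, hv⟩ := exists_between hx
  (hp.2.trans (hF.rightLim_le hxv)).trans (le_of_lt_upperQuantile hF hlow hv)

lemma lt_of_mem_filledIn_of_upperQuantile_lt (hF : Monotone F) (hhigh : ∃ x, τ < F x)
    (hp : p ∈ filledIn F x) (hx : upperQuantile F τ < x) : τ < p :=
  let ⟨_, hv, hvx⟩ := exists_between hx
  (lt_of_upperQuantile_lt hF hhigh hv).trans_le ((hF.le_leftLim hvx).trans hp.1)

end FilledGraph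

section Potential

lemma strictMonoOn_primitive_Ici {f : ℝ → ℝ} {b : ℝ}
    (hf : ∀ p q, IntervalIntegrable f volume p q) (hpos : ∀ x, b < x → 0 < f x) (c : ℝ) :
    StrictMonoOn (fun x => ∫ s in c..x, f s) (Set.Ici b) := by
  intro x hx y _ hxy
  have hsub : (∫ s in c..y, f s) - ∫ s in c..x, f s = ∫ s in x..y, f s :=
    intervalIntegral.integral_interval_sub_left (hf c y) (hf c x)
  have hint : 0 < ∫ s in x..y, f s :=
    intervalIntegral.intervalIntegral_pos_of_pos_on (hf x y)
      (fun s hs => hpos s (lt_of_le_of_lt hx hs.1)) hxy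
  exact sub_pos.1 (hsub ▸ hint)

lemma strictAntiOn_primitive_Iic {f : ℝ → ℝ} {a : ℝ}
    (hf : ∀ p q, IntervalIntegrable f volume p q) (hneg : ∀ x, x < a → f x < 0) (c : ℝ) :
    StrictAntiOn (fun x => ∫ s in c..x, f s) (Set.Iic a) := by
  intro x _ y hy hxy
  have hsub : (∫ s in c..x, f s) - ∫ s in c..y, f s = ∫ s in x..y, -f s := by
    rw [intervalIntegral.integral_interval_sub_left (hf c x) (hf c y),
      intervalIntegral.integral_symm, intervalIntegral.integral_neg]
  have hint : 0 < ∫ s in x..y, -f s :=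
    intervalIntegral.intervalIntegral_pos_of_pos_on (hf x y).neg
      (fun s hs => neg_pos.2 (hneg s (lt_of_lt_of_le hs.2 hy))) hxy
  exact sub_pos.1 (hsub ▸ hint)

/-- One coordinate of the Lyapunov function: the primitive of `F - τ` vanishing at the lower
`τ`-quantile. -/
noncomputable def quantilePotential (F : ℝ → ℝ) (τ x : ℝ) : ℝ :=
  ∫ s in (lowerQuantile F τ)..x, (F s - τ)

variable {F : ℝ → ℝ} {τ : ℝ}

lemma strictAntiOn_quantilePotential (hF : Monotone F) (hlow : ∃ x, F x < τ) :
    StrictAntiOn (quantilePotential F τ) (Set.Iic (lowerQuantile F τ)) :=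
  strictAntiOn_primitive_Iic (fun _ _ => hF.intervalIntegrable.sub intervalIntegrable_const)
    (fun _ hx => sub_neg.2 (lt_of_lt_lowerQuantile hF hlow hx)) _

lemma strictMonoOn_quantilePotential (hF : Monotone F) (hhigh : ∃ x, τ < F x) :
    StrictMonoOn (quantilePotential F τ) (Set.Ici (upperQuantile F τ)) :=
  strictMonoOn_primitive_Ici (fun _ _ => hF.intervalIntegrable.sub intervalIntegrable_const)
    (fun _ hx => sub_pos.2 (lt_of_upperQuantile_lt hF hhigh hx)) _

lemma quantilePotential_eq_zero (hF : Monotone F) (hlow : ∃ x, F x ≤ τ) (hhigh : ∃ x, τ ≤ F x)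
    {x : ℝ} (hx : x ∈ Set.Icc (lowerQuantile F τ) (upperQuantile F τ)) :
    quantilePotential F τ x = 0 := by
  have hzero : (Set.Ioo (lowerQuantile F τ) x).EqOn (fun s => F s - τ) 0 := fun s hs =>
    sub_eq_zero.2 <| le_antisymm (le_of_lt_upperQuantile hF hlow (hs.2.trans_le hx.2))
      (le_of_lowerQuantile_lt hF hhigh hs.1)
  exact (intervalIntegral.integral_congr_Ioo_of_le hx.1 hzero).trans intervalIntegral.integral_zero

end Potential

section IndefiniteIntegrals

/-- `y` is an indefinite integral of `w` on `[0, ∞)`, that is, `w` is integrable on bounded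
intervals and `y t = y 0 + ∫ u in 0..t, w u` for all `t ≥ 0`. A solution of a differential inclusion
is such a `y` for which `w` is an almost everywhere selection of the right-hand side. -/
structure IsIndefiniteIntegral {E : Type*} [NormedAddCommGroup E] [NormedSpace ℝ E]
    (y w : ℝ → E) : Prop where
  intervalIntegrable : ∀ t : ℝ, 0 ≤ t → IntervalIntegrable w volume 0 t
  eq_add_integral : ∀ t : ℝ, 0 ≤ t → y t = y 0 + ∫ u in (0 : ℝ)..t, w u

namespace IsIndefiniteIntegral

section NormedSpace

variable {E : Type*} [NormedAddCommGroup E] [NormedSpace ℝ E] {y w : ℝ → E}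

lemma neg (hy : IsIndefiniteIntegral y w) :
    IsIndefiniteIntegral (fun t => -y t) (fun t => -w t) where
  intervalIntegrable t ht := (hy.intervalIntegrable t ht).neg
  eq_add_integral t ht := by
    rw [intervalIntegral.integral_neg, hy.eq_add_integral t ht, neg_add]

lemma eval {ι : Type*} [Fintype ι] [CompleteSpace E] {z g : ℝ → ι → E}
    (hz : IsIndefiniteIntegral z g) (i : ι) :
    IsIndefiniteIntegral (fun t => z t i) (fun t => g t i) where
  intervalIntegrable t ht :=
    ⟨(hz.intervalIntegrable t ht).1.eval i, (hz.intervalIntegrable t ht).2.eval i⟩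
  eq_add_integral t ht := by
    have hcomm : ∫ u in (0 : ℝ)..t, g u i = (∫ u in (0 : ℝ)..t, g u) i :=
      (ContinuousLinearMap.proj (R := ℝ) i).intervalIntegral_comp_comm (hz.intervalIntegrable t ht)
    exact (congrFun (hz.eq_add_integral t ht) i).trans (congrArg (z 0 i + ·) hcomm.symm)

lemma sub_eq_integral (hy : IsIndefiniteIntegral y w) {s t : ℝ} (hs : 0 ≤ s) (ht : 0 ≤ t) :
    y t - y s = ∫ u in s..t, w u := by
  rw [hy.eq_add_integral t ht, hy.eq_add_integral s hs, add_sub_add_left_eq_sub,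
    intervalIntegral.integral_interval_sub_left (hy.intervalIntegrable t ht)
      (hy.intervalIntegrable s hs)]

lemma continuousOn (hy : IsIndefiniteIntegral y w) {t : ℝ} (ht : 0 ≤ t) :
    ContinuousOn y (Set.Icc 0 t) := by
  have hprim := intervalIntegral.continuousOn_primitive_interval' (hy.intervalIntegrable t ht)
    Set.left_mem_uIcc
  rw [Set.uIcc_of_le ht] at hprim
  exact (continuousOn_const.add hprim).congr fun r hr => hy.eq_add_integral r hr.1

end NormedSpace

end IsIndefiniteIntegral

lemma integral_pos_of_ae_pos {Ω : Type*} [MeasurableSpace Ω] {μ : Measure Ω} [NeZero μ]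
    {f : Ω → ℝ} (hf : Integrable f μ) (hpos : ∀ᵐ x ∂μ, 0 < f x) : 0 < ∫ x, f x ∂μ := by
  have hsupp : Function.support f =ᵐ[μ] Set.univ :=
    eventuallyEq_univ.2 (hpos.mono fun _ hx => hx.ne')
  rw [integral_pos_iff_support_of_nonneg_ae (hpos.mono fun _ hx => hx.le) hf, measure_congr hsupp]
  exact NeZero.pos _

lemma exists_last_ge {α β : Type*} [ConditionallyCompleteLinearOrder α] [TopologicalSpace α]
    [OrderTopology α] [LinearOrder β] [TopologicalSpace β] [OrderClosedTopology β]
    {f : α → β} {s t : α} {M : β} (hst : s ≤ t) (hf : ContinuousOn f (Set.Icc s t)) (hs : M ≤ f s) :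
    ∃ r ∈ Set.Icc s t, M ≤ f r ∧ ∀ u ∈ Set.Ioc r t, f u < M := by
  have hclosed : IsClosed (Set.Icc s t ∩ f ⁻¹' Set.Ici M) :=
    hf.preimage_isClosed_of_isClosed isClosed_Icc isClosed_Ici
  obtain ⟨r, ⟨hr, hMr⟩, hlast⟩ := (isCompact_Icc.of_isClosed_subset hclosed
    Set.inter_subset_left).exists_isGreatest ⟨s, Set.left_mem_Icc.2 hst, hs⟩
  refine ⟨r, hr, hMr, fun u hu => not_le.1 fun hMu => ?_⟩
  exact hu.1.not_ge (hlast ⟨⟨hr.1.trans hu.1.le, hu.2⟩, hMu⟩)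

namespace IsIndefiniteIntegral

variable {y w : ℝ → ℝ} {c s t : ℝ}

lemma le_of_ae_nonneg (hy : IsIndefiniteIntegral y w) (hs : 0 ≤ s) (hst : s ≤ t)
    (hw : ∀ᵐ u ∂volume.restrict (Set.Ioc s t), 0 ≤ w u) : y s ≤ y t := by
  rw [← sub_nonneg, hy.sub_eq_integral hs (hs.trans hst), intervalIntegral.integral_of_le hst]
  exact integral_nonneg_of_ae hw

lemma lt_of_ae_pos (hy : IsIndefiniteIntegral y w) (hs : 0 ≤ s) (hst : s < t)
    (hw : ∀ᵐ u ∂volume.restrict (Set.Ioc s t), 0 < w u) : y s < y t := by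
  have ht : 0 ≤ t := hs.trans hst.le
  have hint : IntervalIntegrable w volume s t :=
    (hy.intervalIntegrable s hs).symm.trans (hy.intervalIntegrable t ht)
  have : NeZero (volume.restrict (Set.Ioc s t)) := ⟨by simp [hst]⟩
  rw [← sub_pos, hy.sub_eq_integral hs ht, intervalIntegral.integral_of_le hst.le]
  exact integral_pos_of_ae_pos hint.1 hw

lemma min_le_of_ae_nonneg_below (hy : IsIndefiniteIntegral y w)
    (hw : ∀ᵐ u ∂volume.restrict (Set.Ici 0), y u < c → 0 ≤ w u) (hs : 0 ≤ s) (hst : s ≤ t) :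
    min (y s) c ≤ y t := by
  obtain ⟨r, hr, hMr, hlast⟩ := exists_last_ge hst
    ((hy.continuousOn (hs.trans hst)).mono (Set.Icc_subset_Icc_left hs)) (min_le_left (y s) c)
  have hr0 : 0 ≤ r := hs.trans hr.1
  refine hMr.trans (hy.le_of_ae_nonneg hr0 hr.2 ?_)
  filter_upwards [ae_restrict_of_ae_restrict_of_subset
    (fun u hu => hr0.trans (le_of_lt hu.1)) hw, ae_restrict_mem measurableSet_Ioc] with u hwu hu
  exact hwu ((hlast u hu).trans_le (min_le_right _ _))

lemma lt_of_ae_pos_below (hy : IsIndefiniteIntegral y w)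
    (hw : ∀ᵐ u ∂volume.restrict (Set.Ici 0), y u < c → 0 < w u) (hs : 0 ≤ s) (hst : s < t)
    (hc : y s < c) : y s < y t := by
  by_contra! hle
  have hbelow : ∀ u ∈ Set.Ioc s t, y u < c := fun u hu => by
    have hmin : min (y u) c ≤ y t := hy.min_le_of_ae_nonneg_below
      (hw.mono fun _ hpos hlt => (hpos hlt).le) (hs.trans hu.1.le) hu.2
    exact (min_lt_iff.1 (hmin.trans_lt (hle.trans_lt hc))).resolve_right (lt_irrefl c)
  refine hle.not_gt (hy.lt_of_ae_pos hs hst ?_)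
  filter_upwards [ae_restrict_of_ae_restrict_of_subset
    (fun u hu => hs.trans (le_of_lt hu.1)) hw, ae_restrict_mem measurableSet_Ioc] with u hwu hu
  exact hwu (hbelow u hu)

lemma le_max_of_ae_nonpos_above (hy : IsIndefiniteIntegral y w)
    (hw : ∀ᵐ u ∂volume.restrict (Set.Ici 0), c < y u → w u ≤ 0) (hs : 0 ≤ s) (hst : s ≤ t) :
    y t ≤ max (y s) c := by
  have hmin : min (-y s) (-c) ≤ -y t := hy.neg.min_le_of_ae_nonneg_below
    (hw.mono fun _ hwu hlt => neg_nonneg.2 (hwu (neg_lt_neg_iff.1 hlt))) hs hst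
  rwa [min_neg_neg, neg_le_neg_iff] at hmin

lemma lt_of_ae_neg_above (hy : IsIndefiniteIntegral y w)
    (hw : ∀ᵐ u ∂volume.restrict (Set.Ici 0), c < y u → w u < 0) (hs : 0 ≤ s) (hst : s < t)
    (hc : c < y s) : y t < y s :=
  neg_lt_neg_iff.1 <| hy.neg.lt_of_ae_pos_below
    (hw.mono fun _ hwu hlt => neg_pos.2 (hwu (neg_lt_neg_iff.1 hlt))) hs hst (neg_lt_neg hc)

end IsIndefiniteIntegral

end IndefiniteIntegrals

section ScalarInclusion

variable {F y w : ℝ → ℝ} {τ s t : ℝ}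

lemma quantilePotential_lt_of_notMem (hF : Monotone F) (hlow : ∃ x, F x < τ)
    (hhigh : ∃ x, τ < F x) (hy : IsIndefiniteIntegral y w)
    (hw : ∀ᵐ u ∂volume.restrict (Set.Ici 0), τ - w u ∈ filledIn F (y u))
    (hs : 0 ≤ s) (hst : s < t)
    (hys : y s ∉ Set.Icc (lowerQuantile F τ) (upperQuantile F τ)) :
    quantilePotential F τ (y t) < quantilePotential F τ (y s) := by
  rcases lt_or_ge (y s) (lowerQuantile F τ) with hbelow | hge
  · have hlt : y s < y t := hy.lt_of_ae_pos_below (hw.mono fun _ hp hlt =>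
      (sub_lt_self_iff τ).1 (lt_of_mem_filledIn_of_lt_lowerQuantile hF hlow hp hlt)) hs hst hbelow
    have hle : y t ≤ max (y s) (lowerQuantile F τ) := hy.le_max_of_ae_nonpos_above
      (hw.mono fun _ hp hlt => (le_sub_self_iff τ).1
        (le_of_mem_filledIn_of_lowerQuantile_lt hF (hhigh.imp fun _ => le_of_lt) hp hlt)) hs hst.le
    rw [max_eq_right hbelow.le] at hle
    exact strictAntiOn_quantilePotential hF hlow hbelow.le hle hlt
  · have habove : upperQuantile F τ < y s := not_le.1 fun hle => hys ⟨hge, hle⟩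
    have hlt : y t < y s := hy.lt_of_ae_neg_above (hw.mono fun _ hp hlt => by
      linarith [lt_of_mem_filledIn_of_upperQuantile_lt hF hhigh hp hlt]) hs hst habove
    have hle : min (y s) (upperQuantile F τ) ≤ y t := hy.min_le_of_ae_nonneg_below
      (hw.mono fun _ hp hlt => (sub_le_self_iff τ).1
        (le_of_mem_filledIn_of_lt_upperQuantile hF (hlow.imp fun _ => le_of_lt) hp hlt)) hs hst.le
    rw [min_eq_right habove.le] at hle
    exact strictMonoOn_quantilePotential hF hhigh hle habove.le hlt

lemma eq_of_mem_quantileInterval (hF : Monotone F) (hlow : ∃ x, F x ≤ τ) (hhigh : ∃ x, τ ≤ F x)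
    (hy : IsIndefiniteIntegral y w)
    (hw : ∀ᵐ u ∂volume.restrict (Set.Ici 0), τ - w u ∈ filledIn F (y u))
    (hs : 0 ≤ s) (hst : s ≤ t)
    (hys : y s ∈ Set.Icc (lowerQuantile F τ) (upperQuantile F τ)) : y t = y s := by
  have hle : y t ≤ max (y s) (lowerQuantile F τ) := hy.le_max_of_ae_nonpos_above
    (hw.mono fun _ hp hlt => (le_sub_self_iff τ).1
      (le_of_mem_filledIn_of_lowerQuantile_lt hF hhigh hp hlt)) hs hst
  have hge : min (y s) (upperQuantile F τ) ≤ y t := hy.min_le_of_ae_nonneg_below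
    (hw.mono fun _ hp hlt => (sub_le_self_iff τ).1
      (le_of_mem_filledIn_of_lt_upperQuantile hF hlow hp hlt)) hs hst
  rw [max_eq_left hys.1] at hle
  rw [min_eq_left hys.2] at hge
  exact le_antisymm hle hge

end ScalarInclusion

theorem lyapunov_function_for_quantile_inclusion_general {ι : Type*} [Fintype ι]
    {F : ℝ → ℝ} (hF : Monotone F) {τ : ι → ℝ}
    (hlow : ∀ i, ∃ x, F x < τ i) (hhigh : ∀ i, ∃ x, τ i < F x)
    {z g : ℝ → ι → ℝ} (hz : IsIndefiniteIntegral z g)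
    (hg : ∀ᵐ u ∂volume.restrict (Set.Ici 0), ∀ i, τ i - g u i ∈ filledIn F (z u i)) :
    (∀ s t : ℝ, 0 ≤ s → s < t →
      (¬∀ i, z s i ∈ Set.Icc (lowerQuantile F (τ i)) (upperQuantile F (τ i))) →
      ∑ i, quantilePotential F (τ i) (z t i) < ∑ i, quantilePotential F (τ i) (z s i)) ∧
    ∀ θ : ι → ℝ, (∀ i, θ i ∈ Set.Icc (lowerQuantile F (τ i)) (upperQuantile F (τ i))) →
      ∑ i, quantilePotential F (τ i) (θ i) = 0 := by
  have hlow' i : ∃ x, F x ≤ τ i := (hlow i).imp fun _ => le_of_lt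
  have hhigh' i : ∃ x, τ i ≤ F x := (hhigh i).imp fun _ => le_of_lt
  have hgi i := hg.mono fun _ hu => hu i
  refine ⟨fun s t hs hst hzs => ?_, fun θ hθ => Finset.sum_eq_zero fun i _ =>
    quantilePotential_eq_zero hF (hlow' i) (hhigh' i) (hθ i)⟩
  have hlt i := quantilePotential_lt_of_notMem hF (hlow i) (hhigh i) (hz.eval i) (hgi i) hs hst
  obtain ⟨j, hj⟩ := not_forall.1 hzs
  refine Finset.sum_lt_sum (fun i _ => ?_) ⟨j, Finset.mem_univ j, hlt j hj⟩
  by_cases hi : z s i ∈ Set.Icc (lowerQuantile F (τ i)) (upperQuantile F (τ i))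
  · exact (congrArg _ (eq_of_mem_quantileInterval hF (hlow' i) (hhigh' i) (hz.eval i) (hgi i)
      hs hst.le hi)).le
  · exact (hlt i hi).le

section CDF

variable {τ : ℝ} (μ : Measure ℝ)

lemma exists_cdf_lt (hτ : 0 < τ) : ∃ x, ProbabilityTheory.cdf μ x < τ :=
  ((ProbabilityTheory.tendsto_cdf_atBot μ).eventually_lt_const hτ).exists

lemma exists_lt_cdf (hτ : τ < 1) : ∃ x, τ < ProbabilityTheory.cdf μ x :=
  ((ProbabilityTheory.tendsto_cdf_atTop μ).eventually_const_lt hτ).exists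

end CDF

lemma midpoint_level_mem_Ioo {m : ℕ} (i : Fin m) :
    (2 * (i : ℝ) + 1) / (2 * m) ∈ Set.Ioo (0 : ℝ) 1 := by
  have hi : (i : ℝ) + 1 ≤ m := by exact_mod_cast i.2
  have hm : (0 : ℝ) < 2 * m := by linarith [Nat.cast_nonneg (α := ℝ) (i : ℕ)]
  exact ⟨by positivity, by rw [div_lt_one hm]; linarith⟩

/-- `L(θ) = ∑ i, ∫_{a_i}^{θ_i} (F(s) − τ_i) ds` is a Lyapunov function for the
differential inclusion `∂_t z_t ∈ H(z_t)` (with `H(θ) = {h : h_i ∈ τ_i − [F(θ_i⁻), F(θ_i)]}`)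
and the quantile set `Λ`: along any solution `z`, `L` strictly decreases as long as `z`
is outside `Λ`, and `L` vanishes on `Λ`. -/
theorem lyapunov_function_for_quantile_inclusion
    (μ : Measure ℝ) [IsProbabilityMeasure μ]
    (F : ℝ → ℝ) (hF : F = fun x => (μ (Set.Iic x)).toReal)
    (m : ℕ) (hm : 1 ≤ m)
    (τ a b : Fin m → ℝ)
    (hτ : ∀ i : Fin m, τ i = (2 * (i : ℝ) + 1) / (2 * m))
    (ha : ∀ i : Fin m, a i = sInf {x : ℝ | τ i ≤ F x})
    (hb : ∀ i : Fin m, b i = sSup {x : ℝ | F x ≤ τ i})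
    (Λ : Set (Fin m → ℝ))
    (hΛ : Λ = {θ | ∀ i : Fin m, θ i ∈ Set.Icc (a i) (b i)})
    (L : (Fin m → ℝ) → ℝ)
    (hL : L = fun θ => ∑ i : Fin m, ∫ s in (a i)..(θ i), (F s - τ i))
    (H : (Fin m → ℝ) → Set (Fin m → ℝ))
    (hH : ∀ θ : Fin m → ℝ, H θ =
      {h | ∀ i : Fin m,
        ∃ p ∈ Set.Icc (Function.leftLim F (θ i)) (F (θ i)), h i = τ i - p})
    (z g : ℝ → (Fin m → ℝ))
    (hg_int : ∀ t : ℝ, 0 ≤ t → IntervalIntegrable g volume 0 t)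
    (hz : ∀ t : ℝ, 0 ≤ t → z t = z 0 + ∫ u in (0 : ℝ)..t, g u)
    (hgH : ∀ᵐ u ∂(volume.restrict (Set.Ici (0 : ℝ))), g u ∈ H (z u)) :
    (∀ s t : ℝ, 0 ≤ s → s < t → z s ∉ Λ → L (z t) < L (z s)) ∧
    (∀ θ ∈ Λ, L θ = 0) := by
  obtain rfl : F = ProbabilityTheory.cdf μ := by
    ext x
    rw [hF, ProbabilityTheory.cdf_eq_real, Measure.real]
  obtain rfl : a = fun i => lowerQuantile (ProbabilityTheory.cdf μ) (τ i) := funext ha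
  obtain rfl : b = fun i => upperQuantile (ProbabilityTheory.cdf μ) (τ i) := funext hb
  have hmono := ProbabilityTheory.monotone_cdf μ
  have hlevel (i : Fin m) : τ i ∈ Set.Ioo (0 : ℝ) 1 := hτ i ▸ midpoint_level_mem_Ioo i
  have hg : ∀ᵐ u ∂volume.restrict (Set.Ici 0), ∀ i, τ i - g u i ∈
      filledIn (ProbabilityTheory.cdf μ) (z u i) := hgH.mono fun u hu i => by
    obtain ⟨p, hp, hgp⟩ := (hH (z u) ▸ hu) i
    rw [hgp, sub_sub_cancel]
    exact Icc_leftLim_subset_filledIn hmono hp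
  subst hΛ hL
  exact lyapunov_function_for_quantile_inclusion_general hmono
    (fun i => exists_cdf_lt μ (hlevel i).1) (fun i => exists_lt_cdf μ (hlevel i).2) ⟨hg_int, hz⟩ hg
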